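/- Let $n\in\mathbb{N}$, $p\in(0,1)$ and $\widetilde C\in(0,\infty)$. Let $\{f_j\}_{j\in\mathbb{N}}$ be a sequence of Lebesgue measurable functions on $\mathbb{R}^n$ and $\{\lambda_j\}_{j\in\mathbb{N}}$ a sequence of complex numbers such that $\sum_{j}|\lambda_j|^p<\infty$ and, for every $j\in\mathbb{N}$ and every $\alpha\in(0,\infty)$, $|\{x\in\mathbb{R}^n:\ |f_j(x)|>\alpha\}|\le \widetilde C\,\alpha^{-p}$. Then for every $\alpha\in(0,\infty)$, $\big|\big\{x\in\mathbb{R}^n:\ \sum_{j}|\lambda_j|\,|f_j(x)|>\alpha\big\}\big|\le \widetilde C\,\frac{2-p}{1-p}\,\alpha^{-p}\sum_{j}|\lambda_j|^p$. -/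

import Mathlib

/-!
Write `g_j = |λ_j| |f_j|`; rescaling the hypothesis gives `|{g_j > t}| ≤ C̃ |λ_j|^p t^{-p}`.
Fix `α` and truncate every `g_j` at height `α`. Outside `E = ⋃_j {g_j > α}`, whose measure is at
most `C̃ α^{-p} ∑ |λ_j|^p`, the truncations agree with the `g_j`. Since `p < 1`, the layer-cake
formula gives `∫ min(g_j, α) ≤ ∫_0^α C̃ |λ_j|^p t^{-p} dt = C̃ |λ_j|^p α^{1-p} / (1-p)`
(`lintegral_min_le`), so Markov's inequality bounds the measure of `{∑ min(g_j, α) ≥ α}` by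
`C̃ α^{-p} ∑ |λ_j|^p / (1-p)`. The two contributions add up to the constant
`1 + 1/(1-p) = (2-p)/(1-p)`.
-/

open MeasureTheory ENNReal NNReal

/-- A weak-type `p` bound with `p < 1` controls the integral of the truncation at height `α`. -/
lemma lintegral_min_le {X : Type*} [MeasurableSpace X] (μ : Measure X) {p K α : ℝ}
    (hp1 : p < 1) (hK : 0 ≤ K) (hα : 0 < α) (g : X → ℝ) (hg : Measurable g)
    (hg0 : ∀ x, 0 ≤ g x)
    (hd : ∀ t : ℝ, 0 < t → μ {x | t < g x} ≤ ENNReal.ofReal (K * t ^ (-p))) :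
    ∫⁻ x, ENNReal.ofReal (min (g x) α) ∂μ ≤
      ENNReal.ofReal (K * (α ^ (1 - p) / (1 - p))) := by
  rw [lintegral_eq_lintegral_meas_lt μ
    (Filter.Eventually.of_forall fun x => le_min (hg0 x) hα.le)
    (hg.min measurable_const).aemeasurable]
  have hint : IntervalIntegrable (fun t : ℝ => K * t ^ (-p)) volume 0 α :=
    (intervalIntegral.intervalIntegrable_rpow' (by linarith)).const_mul K
  have hval : ∫ t in (0 : ℝ)..α, K * t ^ (-p) = K * (α ^ (1 - p) / (1 - p)) := by
    rw [intervalIntegral.integral_const_mul, integral_rpow (Or.inl (by linarith)),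
      show -p + 1 = 1 - p by ring, Real.zero_rpow (by linarith), sub_zero]
  rw [← hval, intervalIntegral.integral_of_le hα.le,
    ofReal_integral_eq_lintegral_ofReal
      ((intervalIntegrable_iff_integrableOn_Ioc_of_le hα.le).1 hint)
      ((ae_restrict_iff' measurableSet_Ioc).2 (Filter.Eventually.of_forall fun t ht =>
        mul_nonneg hK (Real.rpow_nonneg ht.1.le _))),
    ← lintegral_indicator measurableSet_Ioi, ← lintegral_indicator measurableSet_Ioc]
  refine lintegral_mono fun t => ?_
  by_cases h0 : 0 < t
  · by_cases h1 : t ≤ α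
    · rw [Set.indicator_of_mem (show t ∈ Set.Ioi (0 : ℝ) from h0),
        Set.indicator_of_mem (show t ∈ Set.Ioc 0 α from ⟨h0, h1⟩)]
      refine le_trans (measure_mono fun x (hx : t < min (g x) α) => ?_) (hd t h0)
      exact (lt_min_iff.1 hx).1
    · have : {x | t < min (g x) α} = ∅ := by
        ext x
        simp only [Set.mem_ofPred_eq, lt_min_iff, Set.mem_empty_iff_false, iff_false]
        exact fun h => h1 h.2.le
      rw [Set.indicator_of_mem (show t ∈ Set.Ioi (0 : ℝ) from h0), this, measure_empty]
      exact zero_le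
  · rw [Set.indicator_of_notMem (show t ∉ Set.Ioi (0 : ℝ) from h0)]
    exact zero_le



/-- a weak-type summation lemma, Lemma 2.2 of the paper.
Let `p ∈ (0,1)` and `C̃ ∈ (0,∞)`. If `{f_j}` are measurable functions on `ℝⁿ` whose
distribution functions satisfy `|{|f_j| > α}| ≤ C̃ α^{-p}` for all `α > 0`, and
`∑_j |λ_j|^p < ∞`, then `|{∑_j |λ_j||f_j| > α}| ≤ C̃ ((2-p)/(1-p)) α^{-p} ∑_j |λ_j|^p`. -/
theorem weak_type_summation
    (n : ℕ) (hn : 0 < n) (p : ℝ) (hp : p ∈ Set.Ioo (0 : ℝ) 1)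
    (Ctil : ℝ) (hCtil : 0 < Ctil)
    (f : ℕ → EuclideanSpace ℝ (Fin n) → ℂ) (hf : ∀ j, Measurable (f j))
    (lam : ℕ → ℂ) (hlam : Summable fun j => ‖lam j‖ ^ p)
    (hdist : ∀ j : ℕ, ∀ α ∈ Set.Ioi (0 : ℝ),
      volume {x : EuclideanSpace ℝ (Fin n) | α < ‖f j x‖} ≤ ENNReal.ofReal (Ctil * α ^ (-p))) :
    ∀ α ∈ Set.Ioi (0 : ℝ),
      volume {x : EuclideanSpace ℝ (Fin n) |
          ENNReal.ofReal α < ∑' j : ℕ, ((‖lam j‖₊ * ‖f j x‖₊ : ℝ≥0) : ℝ≥0∞)} ≤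
        ENNReal.ofReal
          (Ctil * ((2 - p) / (1 - p)) * α ^ (-p) * ∑' j : ℕ, ‖lam j‖ ^ p) := by
  intro α hα
  have hα : 0 < α := hα
  obtain ⟨hp0, hp1⟩ := hp
  set g : ℕ → EuclideanSpace ℝ (Fin n) → ℝ := fun j x => ‖lam j‖ * ‖f j x‖ with hgdef
  have hgm : ∀ j, Measurable (g j) := fun j => (hf j).norm.const_mul _
  have hg0 : ∀ j x, 0 ≤ g j x := fun j x => by positivity
  have hgd : ∀ j (t : ℝ), 0 < t →
      volume {x | t < g j x} ≤ ENNReal.ofReal (Ctil * ‖lam j‖ ^ p * t ^ (-p)) := by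
    intro j t ht
    rcases (norm_nonneg (lam j)).eq_or_lt with h | h
    · have : {x | t < g j x} = ∅ := by
        ext x
        simp [hgdef, ← h, ht.le]
      rw [this, measure_empty]
      exact zero_le
    · have h1 := hdist j (t / ‖lam j‖) (div_pos ht h)
      have h2 : (t / ‖lam j‖) ^ (-p) = ‖lam j‖ ^ p * t ^ (-p) := by
        rw [Real.div_rpow ht.le h.le, Real.rpow_neg h.le, div_inv_eq_mul, mul_comm]
      rw [h2, ← mul_assoc] at h1
      refine le_trans (measure_mono fun x hx => ?_) h1
      simp only [Set.mem_ofPred_eq] at hx ⊢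
      rw [div_lt_iff₀ h, mul_comm]
      exact hx
  have hS0 : 0 ≤ ∑' j, ‖lam j‖ ^ p := tsum_nonneg fun j => by positivity
  have hαp : 0 < α ^ (-p) := Real.rpow_pos_of_pos hα _
  have h1p : 0 < 1 - p := by linarith
  have hsum : ∀ c : ℝ, 0 ≤ c →
      ∑' j, ENNReal.ofReal (c * ‖lam j‖ ^ p) = ENNReal.ofReal (c * ∑' j, ‖lam j‖ ^ p) := by
    intro c hc
    rw [← _root_.tsum_mul_left, ENNReal.ofReal_tsum_of_nonneg (fun j => by positivity)
      (hlam.mul_left c)]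
  set E : Set (EuclideanSpace ℝ (Fin n)) := ⋃ j, {x | α < g j x} with hE
  have hEm : volume E ≤ ENNReal.ofReal (Ctil * α ^ (-p) * ∑' j, ‖lam j‖ ^ p) := by
    rw [← hsum _ (by positivity)]
    refine (measure_iUnion_le _).trans (ENNReal.tsum_le_tsum fun j => ?_)
    refine (hgd j α hα).trans (le_of_eq ?_)
    ring_nf
  set H : EuclideanSpace ℝ (Fin n) → ℝ≥0∞ :=
    fun x => ∑' j, ENNReal.ofReal (min (g j x) α) with hH
  have hmeas : ∀ j, Measurable fun x => ENNReal.ofReal (min (g j x) α) := fun j =>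
    ((hgm j).min measurable_const).ennreal_ofReal
  have hHi : ∫⁻ x, H x ≤
      ENNReal.ofReal (Ctil * (α ^ (1 - p) / (1 - p)) * ∑' j, ‖lam j‖ ^ p) := by
    rw [lintegral_tsum fun j => (hmeas j).aemeasurable, ← hsum _ (by positivity)]
    refine ENNReal.tsum_le_tsum fun j => ?_
    refine (lintegral_min_le volume hp1 (by positivity) hα (g j) (hgm j) (hg0 j)
      (hgd j)).trans (le_of_eq ?_)
    ring_nf
  have hF : volume {x | ENNReal.ofReal α ≤ H x} ≤
      ENNReal.ofReal (Ctil * (α ^ (-p) / (1 - p)) * ∑' j, ‖lam j‖ ^ p) := by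
    refine (meas_ge_le_lintegral_div (Measurable.tsum hmeas).aemeasurable
      (ENNReal.ofReal_pos.2 hα).ne' ENNReal.ofReal_ne_top).trans ?_
    refine (ENNReal.div_le_div_right hHi _).trans (le_of_eq ?_)
    rw [← ENNReal.ofReal_div_of_pos hα, sub_eq_add_neg, Real.rpow_add hα, Real.rpow_one,
      ← sub_eq_add_neg]
    congr 1
    field_simp
  have hsub : {x | ENNReal.ofReal α < ∑' j : ℕ, ((‖lam j‖₊ * ‖f j x‖₊ : ℝ≥0) : ℝ≥0∞)} ⊆
      E ∪ {x | ENNReal.ofReal α ≤ H x} := by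
    intro x hx
    by_cases hxE : x ∈ E
    · exact Or.inl hxE
    · right
      have hle : ∀ j, g j x ≤ α := fun j => by
        by_contra! h
        exact hxE (Set.mem_iUnion.2 ⟨j, h⟩)
      have hEq : ∑' j : ℕ, ((‖lam j‖₊ * ‖f j x‖₊ : ℝ≥0) : ℝ≥0∞) = H x := by
        refine tsum_congr fun j => ?_
        rw [min_eq_left (hle j), ← ENNReal.ofReal_coe_nnreal]
        rfl
      simp only [Set.mem_ofPred_eq] at hx ⊢
      rw [hEq] at hx
      exact hx.le
  refine (measure_mono hsub).trans ((measure_union_le _ _).trans ((add_le_add hEm hF).trans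
    (le_of_eq ?_)))
  rw [← ENNReal.ofReal_add (by positivity) (by positivity)]
  congr 1
  field_simp
  ring
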